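/- arXiv:2310.18819 — 3 statements merged into one kernel-verified Lean document; each statement's English description precedes it below -/
import Mathlib

section
/- For every natural number m ≥ 1, the ordered configuration space of m distinct points on the 4-sphere, i.e. the subspace of (S⁴)^m consisting of injective m-tuples (equivalently, the space {f : Fin m → S⁴ | f is injective} with the subspace topology of the product topology), is simply connected. -/
/-!
The configuration space of `S⁴` is a retract, by normalization of the entries, of the open set
`rayConf m ⊆ (ℝ⁵)^m` of tuples of nonzero vectors spanning distinct rays, and a retract of a simply
connected space is simply connected (`SimplyConnectedSpace.of_retract`).

That `rayConf m` is simply connected is a general-position argument. A loop in an open subset of a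
normed space is homotopic to a polynomial loop `q`, by Bernstein approximation. The complement of
`rayConf m` has codimension four, since `x i ∈ ℝ x j` for some `i ≠ j`, or `x i = 0`, on it; so the
points `c` for which the cone over `q` with apex `c` meets this complement lie in finitely many `C¹` images
of a space of dimension two less than `(ℝ⁵)^m`. Hausdorff dimension then provides an apex `c` whose
cone stays in `rayConf m` (`exists_cone_point`). The cone is a free homotopy from `q` to a constant
loop, hence `q` is null-homotopic (`homotopic_refl_of_free`, `isSimplyConnected_of_cone`).
-/

open Set Filter Topology unitInterval Module

/-- A loop that is freely homotopic to a constant loop is null-homotopic relative to its base point.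
The loop is first deformed to `δ · const · δ⁻¹`, where `δ t = H (t, 0)` is the track of the base
point, and then `δ` is retracted to the base point. -/
theorem homotopic_refl_of_free {X : Type*} [TopologicalSpace X] {x c : X} (γ : Path x x)
    (H : I × I → X) (hH : Continuous H) (h0 : ∀ s, H (0, s) = γ s) (h1 : ∀ s, H (1, s) = c)
    (hloop : ∀ t, H (t, 0) = H (t, 1)) : γ.Homotopic (Path.refl x) := by
  let π : ℝ → I := projIcc 0 1 zero_le_one
  have hπ : Continuous π := continuous_projIcc
  have hπ0 : ∀ {r : ℝ}, r ≤ 0 → π r = 0 := fun h => projIcc_of_le_left _ h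
  have hπ1 : ∀ {r : ℝ}, 1 ≤ r → π r = 1 := fun h => projIcc_of_right_le _ h
  have hπv : ∀ r : I, π r = r := fun r => projIcc_val _ r
  -- `s ↦ (m s, k s)` runs along the three other sides of the square, from `(0, 0)` to `(0, 1)`
  let m : I → I := fun s => π (min (3 * s) (3 - 3 * s))
  have hm : Continuous m := by fun_prop
  have hm0 : m 0 = 0 := hπ0 (by simp)
  have hm1 : m 1 = 0 := hπ0 (by simp)
  let k : I → I := fun s => π (3 * s - 1)
  have hk : Continuous k := by fun_prop
  have hk0 : k 0 = 0 := hπ0 (by simp)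
  have hk1 : k 1 = 1 := hπ1 (by norm_num)
  have hH0 : H (0, 0) = x := by simp [h0]
  -- on the middle third `m = 1` and `H (1, ·)` is constant; on the outer thirds `k ∈ {0, 1}`
  have key : ∀ s : I, H (m s, k s) = H (m s, 0) := by
    intro s
    rcases le_total (3 * (s : ℝ)) 1 with hs | hs
    · rw [show k s = 0 from hπ0 (by linarith)]
    rcases le_total 2 (3 * (s : ℝ)) with hs' | hs'
    · rw [show k s = 1 from hπ1 (by linarith), hloop]
    · rw [show m s = 1 from hπ1 (le_min hs (by linarith)), h1, h1]
  let δ : Path x x :=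
    { toFun := fun s => H (m s, 0)
      continuous_toFun := by fun_prop
      source' := by simp [hm0, hH0]
      target' := by simp [hm1, hH0] }
  have e1 : γ.Homotopic δ := ⟨
    { toFun := fun p => H (p.1 * m p.2, π ((1 - p.1) * p.2 + p.1 * k p.2))
      continuous_toFun := by fun_prop
      map_zero_left := fun s => by simp [h0, hπv]
      map_one_left := fun s => by simpa [hπv, δ] using key s
      prop' := by
        rintro t s (rfl | rfl)
        · simp [hm0, hk0, hπ0 le_rfl, h0]
        · simp [hm1, hk1, hπ1 le_rfl, h0] }⟩
  have e2 : δ.Homotopic (Path.refl x) := ⟨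
    { toFun := fun p => H (σ p.1 * m p.2, 0)
      continuous_toFun := by fun_prop
      map_zero_left := fun s => by simp [δ]
      map_one_left := fun s => by simp [hH0]
      prop' := by
        rintro t s (rfl | rfl)
        · simp [hm0, δ]
        · simp [hm1, δ] }⟩
  exact e1.trans e2

/-- An open set `U` is simply connected if every `C¹` curve admits a cone point `c` such that the
half-open segments from the curve to `c` (endpoint on the curve excluded) lie in `U`. Not requiring
the curve itself to lie in `U` makes the hypothesis, applied to a straight line, give path
connectedness as well. -/
theorem isSimplyConnected_of_cone {E : Type*} [NormedAddCommGroup E] [NormedSpace ℝ E]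
    {U : Set E} (hU : IsOpen U)
    (hcone : ∀ p : ℝ → E, ContDiff ℝ 1 p →
      ∃ c, ∀ s t : ℝ, 0 < t → t ≤ 1 → (1 - t) • p s + t • c ∈ U) :
    IsSimplyConnected U := by
  rw [IsSimplyConnected, simply_connected_iff_loops_nullhomotopic,
    ← isPathConnected_iff_pathConnectedSpace, isPathConnected_iff]
  refine ⟨⟨?_, ?_⟩, ?_⟩
  · obtain ⟨c, hc⟩ := hcone (fun _ => 0) contDiff_const
    exact ⟨c, by simpa using hc 0 1 one_pos le_rfl⟩
  · intro x hx y hy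
    obtain ⟨c, hc⟩ := hcone (fun s => x + s • (y - x)) (by fun_prop)
    have key : ∀ z ∈ U, (∃ s : ℝ, x + s • (y - x) = z) → JoinedIn U z c := by
      rintro z hz ⟨s, rfl⟩
      refine JoinedIn.of_segment_subset ?_
      rw [segment_eq_image]
      rintro _ ⟨t, ht, rfl⟩
      rcases ht.1.eq_or_lt with rfl | h
      · simpa using hz
      · exact hc s t h ht.2
    exact (key x hx ⟨0, by simp⟩).trans (key y hy ⟨1, by simp⟩).symm
  · intro x γ
    let f : C(I, E) := ⟨fun s => (γ s : E), by fun_prop⟩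
    obtain ⟨ε, hε, hεU⟩ := (isCompact_range f.continuous).exists_thickening_subset_open hU
      (by rintro _ ⟨s, rfl⟩; exact (γ s).2)
    obtain ⟨n, hn, hn0⟩ := (((bernsteinApproximation_uniform f).eventually
      (Metric.ball_mem_nhds f hε)).and (eventually_ne_atTop 0)).exists
    -- Bernstein approximation keeps the endpoints, so the approximating curve is a loop at `x`
    let q : ℝ → E := fun s => ∑ k : Fin (n + 1),
      (bernsteinPolynomial ℝ n k).eval s • f (bernstein.z k)
    have hq : ContDiff ℝ 1 q := by
      refine ContDiff.sum fun k _ => ?_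
      have hk : ContDiff ℝ 1 fun s : ℝ => (bernsteinPolynomial ℝ n k).eval s := by
        simpa using (bernsteinPolynomial ℝ n k).contDiff_aeval (𝕜 := ℝ) 1
      exact hk.smul contDiff_const
    have hqc : Continuous q := hq.continuous
    have hqb : ∀ s : I, q s = bernsteinApproximation n f s := by
      intro s
      simp [q, bernsteinApproximation.apply, bernstein]
    have hq0 : q 0 = x := by simpa [f] using hqb 0
    have hq1 : q 1 = x := by simpa [f, hn0] using hqb 1
    have hseg : ∀ s t : I, (1 - (t : ℝ)) • (γ s : E) + (t : ℝ) • q s ∈ U := by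
      intro s t
      apply hεU
      refine Metric.mem_thickening_iff.2 ⟨f s, ⟨s, rfl⟩, ?_⟩
      have hd : dist (q s) (f s) < ε := by
        rw [hqb]
        exact (ContinuousMap.dist_apply_le_dist s).trans_lt hn
      have : (1 - (t : ℝ)) • (γ s : E) + (t : ℝ) • q s - f s = (t : ℝ) • (q s - f s) := by
        simp only [f, ContinuousMap.coe_mk]; module
      rw [dist_eq_norm, this, norm_smul, ← dist_eq_norm, Real.norm_of_nonneg t.2.1]
      exact (mul_le_of_le_one_left dist_nonneg t.2.2).trans_lt hd
    have hqU : ∀ s : I, q s ∈ U := fun s => by simpa using hseg s 1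
    obtain ⟨c, hc⟩ := hcone q hq
    let γ' : Path x x :=
      { toFun := fun s => ⟨q s, hqU s⟩
        continuous_toFun := by fun_prop
        source' := Subtype.ext (by simp [hq0])
        target' := Subtype.ext (by simp [hq1]) }
    have e1 : γ.Homotopic γ' := ⟨
      { toFun := fun p => ⟨(1 - (p.1 : ℝ)) • (γ p.2 : E) + (p.1 : ℝ) • q p.2, hseg p.2 p.1⟩
        continuous_toFun := by fun_prop
        map_zero_left := fun s => by simp
        map_one_left := fun s => by simp [γ']
        prop' := by
          rintro t s (rfl | rfl)
          · simp [hq0, ← add_smul]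
          · simp [hq1, ← add_smul] }⟩
    have hcU : c ∈ U := by simpa using hc 0 1 one_pos le_rfl
    have hmem : ∀ p : I × I, (1 - (p.1 : ℝ)) • q p.2 + (p.1 : ℝ) • c ∈ U := by
      rintro ⟨t, s⟩
      rcases t.2.1.eq_or_lt with h | h
      · simpa [← h] using hqU s
      · exact hc s t h t.2.2
    refine e1.trans (homotopic_refl_of_free (c := ⟨c, hcU⟩) γ' (fun p => ⟨_, hmem p⟩)
      (by fun_prop) ?_ ?_ ?_)
    · intro s; simp [γ']
    · intro s; simp
    · intro t; simp [hq0, hq1]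

/-- The ambient Euclidean space `ℝ⁵` of `S⁴`. -/
abbrev V5 := EuclideanSpace ℝ (Fin 5)

/-- The tuples whose `i`-th entry is a `C¹` function of the other entries and of three real
parameters form a set of codimension at least two. -/
theorem dimH_graph_le {m : ℕ} (i : Fin m) (g : (ℝ × ℝ × ℝ) × ({k : Fin m // k ≠ i} → V5) → V5)
    (hg : ContDiff ℝ 1 g) :
    dimH {c : Fin m → V5 | ∃ u, c i = g (u, fun k => c k)} ≤ ((5 * (m - 1) + 3 : ℕ) : ENNReal) := by
  classical
  let G : (ℝ × ℝ × ℝ) × ({k : Fin m // k ≠ i} → V5) → Fin m → V5 :=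
    fun w k => if h : k = i then g w else w.2 ⟨k, h⟩
  have hG : ContDiff ℝ 1 G := by
    refine contDiff_pi.2 fun k => ?_
    by_cases h : k = i
    · simpa [G, h] using hg
    · simp only [G, h, dite_false]; fun_prop
  have hsub : {c : Fin m → V5 | ∃ u, c i = g (u, fun k => c k)} ⊆ range G := by
    rintro c ⟨u, hu⟩
    refine ⟨(u, fun k => c k), funext fun k => ?_⟩
    by_cases h : k = i
    · subst h; simp [G, hu]
    · simp [G, h]
  refine (dimH_mono hsub).trans (hG.dimH_range_le.trans ?_)
  have : finrank ℝ ((ℝ × ℝ × ℝ) × ({k : Fin m // k ≠ i} → V5)) = 5 * (m - 1) + 3 := by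
    simp [finrank_prod, finrank_pi_fintype]
    omega
  rw [this]

/-- Tuples of nonzero vectors of `ℝ⁵` spanning pairwise distinct rays; normalizing the entries
retracts this set onto the configuration space of the sphere. -/
def rayConf (m : ℕ) : Set (Fin m → V5) :=
  {x | (∀ i, x i ≠ 0) ∧ ∀ i j, i ≠ j → ‖x j‖ • x i ≠ ‖x i‖ • x j}

theorem isOpen_rayConf (m : ℕ) : IsOpen (rayConf m) := by
  simp only [rayConf, ofPred_and, ofPred_forall]
  refine (isOpen_iInter_of_finite fun i => ?_).inter (isOpen_iInter_of_finite fun i =>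
    isOpen_iInter_of_finite fun j => isOpen_iInter_of_finite fun _ => ?_)
  · exact isOpen_ne_fun (by fun_prop) (by fun_prop)
  · exact isOpen_ne_fun (by fun_prop) (by fun_prop)

/-- General position: every `C¹` curve `p` has a cone point, a generic `c` being one. If the point
at time `t > 0` on the segment from `p s` to `c` leaves `rayConf m`, then, with `τ = (1 - t) / t`, either
`c i = -τ • p s i` or `c i = μ • c j + τ • (μ • p s j - p s i)` for some scalar `μ`. So `c i` is
determined by the other entries and the three parameters `μ, τ, s`, fewer than `dim ℝ⁵ = 5`. -/
theorem exists_cone_point {m : ℕ} (hm : 1 ≤ m) (p : ℝ → Fin m → V5) (hp : ContDiff ℝ 1 p) :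
    ∃ c, ∀ s t : ℝ, 0 < t → t ≤ 1 → (1 - t) • p s + t • c ∈ rayConf m := by
  have hpi : ∀ i, ContDiff ℝ 1 fun s => p s i := contDiff_pi.1 hp
  let A : Fin m → Set (Fin m → V5) := fun i => {c | ∃ u : ℝ × ℝ × ℝ, c i = -(u.2.1 • p u.2.2 i)}
  let B : Fin m → Fin m → Set (Fin m → V5) := fun i j => {c | i ≠ j ∧ ∃ u : ℝ × ℝ × ℝ,
    c i = u.1 • c j + u.2.1 • (u.1 • p u.2.2 j - p u.2.2 i)}
  have hA : ∀ i, dimH (A i) ≤ ((5 * (m - 1) + 3 : ℕ) : ENNReal) := fun i =>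
    dimH_graph_le i (fun w => -(w.1.2.1 • p w.1.2.2 i)) (by fun_prop)
  have hB : ∀ i j, dimH (B i j) ≤ ((5 * (m - 1) + 3 : ℕ) : ENNReal) := by
    intro i j
    by_cases hij : i = j
    · simp [B, hij]
    · have := dimH_graph_le i (fun w => w.1.1 • w.2 ⟨j, Ne.symm hij⟩ +
        w.1.2.1 • (w.1.1 • p w.1.2.2 j - p w.1.2.2 i)) (by fun_prop)
      simpa [B, hij] using this
  have hdim : dimH ((⋃ i, A i) ∪ ⋃ i, ⋃ j, B i j) < finrank ℝ (Fin m → V5) := by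
    have h1 : dimH ((⋃ i, A i) ∪ ⋃ i, ⋃ j, B i j) ≤ ((5 * (m - 1) + 3 : ℕ) : ENNReal) := by
      simp only [dimH_union, dimH_iUnion]
      exact max_le (iSup_le hA) (iSup_le fun i => iSup_le (hB i))
    refine h1.trans_lt (Nat.cast_lt.2 ?_)
    simp [finrank_pi_fintype]
    omega
  obtain ⟨c, hc⟩ := (dense_compl_of_dimH_lt_finrank hdim).nonempty
  simp only [mem_compl_iff, mem_union, mem_iUnion, not_or, not_exists] at hc
  have hne : ∀ s t : ℝ, 0 < t → ∀ i, ((1 - t) • p s + t • c) i ≠ 0 := by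
    intro s t ht i h0
    refine hc.1 i ⟨(0, (1 - t) / t, s), ?_⟩
    have : t • c i = -((1 - t) • p s i) := by
      rw [eq_neg_iff_add_eq_zero, add_comm]; simpa using h0
    rw [← inv_smul_smul₀ ht.ne' (c i), this, smul_neg, smul_smul, div_eq_inv_mul]
  refine ⟨c, fun s t ht _ => ⟨hne s t ht, fun i j hij h => ?_⟩⟩
  have hj := norm_ne_zero_iff.2 (hne s t ht j)
  set a := ‖((1 - t) • p s + t • c) i‖
  set b := ‖((1 - t) • p s + t • c) j‖
  refine hc.2 i j ⟨hij, (a / b, (1 - t) / t, s), ?_⟩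
  have h' : ((1 - t) • p s + t • c) i = (a / b) • ((1 - t) • p s + t • c) j := by
    rw [div_eq_inv_mul, mul_smul, ← h, inv_smul_smul₀ hj]
  have h2 : t • c i = (a / b) • ((1 - t) • p s j + t • c j) - (1 - t) • p s i := by
    rw [eq_sub_iff_add_eq, add_comm]; simpa using h'
  have htt : t⁻¹ * t = 1 := inv_mul_cancel₀ ht.ne'
  rw [← inv_smul_smul₀ ht.ne' (c i), h2]
  simp only [div_eq_mul_inv]
  match_scalars <;> field_simp

theorem SimplyConnectedSpace.of_retract {X Y : Type*} [TopologicalSpace X] [TopologicalSpace Y]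
    [SimplyConnectedSpace Y] (i : C(X, Y)) (r : C(Y, X)) (h : ∀ x, r (i x) = x) :
    SimplyConnectedSpace X := by
  rw [simply_connected_iff_loops_nullhomotopic]
  refine ⟨Function.Surjective.pathConnectedSpace (f := r) (fun x => ⟨i x, h x⟩) r.continuous, ?_⟩
  intro x γ
  have e := ((SimplyConnectedSpace.paths_homotopic (γ.map i.continuous)
    (Path.refl (i x))).map r).pathCast (h x).symm (h x).symm
  convert e using 1
  · ext s; simp [h]
  · ext s; simp [h]

/-- The ordered configuration space of `m ≥ 1` distinct points on the 4-sphere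
(the subspace of `(S⁴)^m` of injective tuples) is simply connected. -/
theorem configuration_space_of_sphere_simply_connected (m : ℕ) (hm : 1 ≤ m) :
    SimplyConnectedSpace
      {f : Fin m → (Metric.sphere (0 : EuclideanSpace ℝ (Fin 5)) 1) // Function.Injective f} := by
  have : SimplyConnectedSpace (rayConf m) :=
    isSimplyConnected_of_cone (isOpen_rayConf m) fun p hp => exists_cone_point hm p hp
  have hs : ∀ v : V5, v ≠ 0 → ‖v‖⁻¹ • v ∈ Metric.sphere (0 : V5) 1 := fun v hv => by
    simp [norm_smul, hv]
  refine SimplyConnectedSpace.of_retract (Y := rayConf m)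
    ⟨fun f => ⟨fun k => (f.1 k : V5), ?_, ?_⟩, ?_⟩
    ⟨fun x => ⟨fun k => ⟨‖x.1 k‖⁻¹ • x.1 k, hs _ (x.2.1 k)⟩, ?_⟩, ?_⟩ ?_
  · exact fun i => ne_zero_of_mem_unit_sphere _
  · intro i j hij h
    refine hij (f.2 (Subtype.ext ?_))
    simpa using h
  · exact Continuous.subtype_mk (continuous_pi fun k =>
      continuous_subtype_val.comp ((continuous_apply k).comp continuous_subtype_val)) _
  · intro i j h
    by_contra hij
    have h' : ‖x.1 i‖⁻¹ • x.1 i = ‖x.1 j‖⁻¹ • x.1 j := congrArg Subtype.val h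
    have hi := norm_ne_zero_iff.2 (x.2.1 i)
    have hj := norm_ne_zero_iff.2 (x.2.1 j)
    refine x.2.2 i j hij ?_
    have hx : x.1 i = ‖x.1 i‖ • ‖x.1 j‖⁻¹ • x.1 j := by rw [← h', smul_inv_smul₀ hi]
    refine (congrArg (‖x.1 j‖ • ·) hx).trans ?_
    rw [smul_comm, smul_inv_smul₀ hj]
  · refine Continuous.subtype_mk (continuous_pi fun k => Continuous.subtype_mk ?_ _) _
    have hk : Continuous fun x : rayConf m => x.1 k :=
      (continuous_apply k).comp continuous_subtype_val
    exact (hk.norm.inv₀ fun x => norm_ne_zero_iff.2 (x.2.1 k)).smul hk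
  · intro f
    ext k : 3
    simp
end

section
/- For every finite subset F of the 4-sphere S⁴, the complement S⁴ \ F (with the subspace topology) is simply connected. -/
/-!
The sphere minus `F` is a retract, by radial projection, of the open set `W` of all points of `ℝ⁵`
lying neither at the origin nor on a ray through a point of `F`. It is therefore enough that `W` is
simply connected, and this is a general position argument.

A loop in the open set `W` is homotopic in `W`, along straight segments, to one of its Bernstein
approximations (`exists_contDiff_homotopic`), so it may be assumed to be the restriction of a smooth
curve `g : ℝ → ℝ⁵`. The points `a • p + b • g s`, with `p` in the finite set `F ∪ {0}` and
`a`, `b`, `s` real, form a set of Hausdorff dimension at most `3 < 5`, so some point `c` is not of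
this form (`exists_generic_point`). Every segment from a point of the loop to `c` then stays in `W`
(`segment_subset_rayCompl`). The union of these segments is a star-shaped, hence simply connected,
subset of `W` containing the loop. Segments to a generic point also show that `W` is path-connected.
-/

open Set Module Topology
open scoped unitInterval

/-- The complement of the union of the closed rays `{r • p | 0 ≤ r}`, for `p ∈ P`. The origin is
removed as soon as `P` is nonempty. -/
def rayCompl {E : Type*} [AddCommGroup E] [Module ℝ E] (P : Set E) : Set E :=
  {x | ∀ p ∈ P, ∀ r : ℝ, 0 ≤ r → x ≠ r • p}

theorem isOpen_rayCompl {E : Type*} [NormedAddCommGroup E] [NormedSpace ℝ E]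
    {P : Set E} (hP : P.Finite) : IsOpen (rayCompl P) := by
  have h : rayCompl P = ⋂ p ∈ P, ((fun r : ℝ => r • p) '' Ici 0)ᶜ := by
    ext x
    simp [rayCompl, eq_comm]
  rw [h]
  refine hP.isOpen_biInter fun p _ => IsClosed.isOpen_compl (self := ?_)
  by_cases hp : p = 0
  · subst hp
    have : (fun r : ℝ => r • (0 : E)) '' Ici 0 = {0} := by
      ext x
      simp only [smul_zero, mem_image, mem_singleton_iff]
      exact ⟨fun ⟨_, _, h⟩ => h.symm, fun h => ⟨0, self_mem_Ici, h.symm⟩⟩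
    rw [this]
    exact isClosed_singleton
  · exact (isClosedEmbedding_smul_left hp).isClosedMap _ isClosed_Ici

theorem segment_subset_rayCompl {E : Type*} [AddCommGroup E] [Module ℝ E] {P : Set E} {x c : E}
    (hx : x ∈ rayCompl P) (hc : ∀ p ∈ P, ∀ a b : ℝ, c ≠ a • p + b • x) :
    segment ℝ x c ⊆ rayCompl P := by
  rintro z ⟨α, β, hα, hβ, hαβ, rfl⟩ p hp r hr h
  by_cases hβ0 : β = 0
  · have hα1 : α = 1 := by linarith
    subst hβ0 hα1
    exact hx p hp r hr (by simpa using h)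
  · refine hc p hp (β⁻¹ * r) (-(β⁻¹ * α)) ?_
    have h' : β • c = r • p - α • x := by rw [← h]; abel
    calc c = β⁻¹ • β • c := by rw [smul_smul, inv_mul_cancel₀ hβ0, one_smul]
      _ = _ := by rw [h']; module

/-- The points excluded are in the range of finitely many `C¹` maps from `ℝ³`, so a dimension
count produces the point. -/
theorem exists_generic_point {E : Type*} [NormedAddCommGroup E] [NormedSpace ℝ E]
    [FiniteDimensional ℝ E] (hE : 3 < finrank ℝ E) {P : Set E} (hP : P.Finite)
    {g : ℝ → E} (hg : ContDiff ℝ 1 g) :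
    ∃ c : E, ∀ p ∈ P, ∀ a b s : ℝ, c ≠ a • p + b • g s := by
  let f : E → ℝ × ℝ × ℝ → E := fun p y => y.1 • p + y.2.1 • g y.2.2
  have hf : ∀ p, ContDiff ℝ 1 (f p) := fun p => by fun_prop
  have hdim : dimH (⋃ p ∈ P, range (f p)) < finrank ℝ E := by
    rw [dimH_bUnion hP.countable]
    refine lt_of_le_of_lt (b := ((3 : ℕ) : ENNReal)) (iSup₂_le fun p _ => ?_)
      (Nat.cast_lt.2 hE)
    simpa using (hf p).dimH_range_le
  obtain ⟨c, hc⟩ := (dense_compl_of_dimH_lt_finrank hdim).nonempty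
  refine ⟨c, fun p hp a b s h => hc ?_⟩
  exact mem_biUnion hp ⟨(a, b, s), h.symm⟩

theorem exists_contDiff_homotopic {E : Type*} [NormedAddCommGroup E] [NormedSpace ℝ E]
    {W : Set E} (hW : IsOpen W) {x y : W} (γ : Path x y) :
    ∃ (q : Path x y) (g : ℝ → E), ContDiff ℝ 1 g ∧ (∀ t : I, (q t : E) = g t) ∧
      γ.Homotopic q := by
  let f : C(I, E) := ⟨fun t => γ t, by fun_prop⟩
  have hK : IsCompact (range f) := isCompact_range f.continuous
  obtain ⟨δ, hδ, hsub⟩ := hK.exists_thickening_subset_open hW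
    (range_subset_iff.2 fun t => (γ t).2)
  obtain ⟨n, hn, hn0⟩ := (((Metric.tendsto_nhds.1 (bernsteinApproximation_uniform f)) δ hδ).and
    (Filter.eventually_ne_atTop 0)).exists
  set B := bernsteinApproximation n f with hB
  have hball : ∀ t, Metric.ball (f t) δ ⊆ W := fun t =>
    (Metric.ball_subset_thickening (mem_range_self t) δ).trans hsub
  have hBt : ∀ t, B t ∈ Metric.ball (f t) δ := fun t =>
    (ContinuousMap.dist_apply_le_dist t).trans_lt hn
  let q : Path x y :=
    { toFun := fun t => ⟨B t, hball t (hBt t)⟩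
      continuous_toFun := by fun_prop
      source' := by ext; simp [hB, f]
      target' := by ext; simp [hB, f, hn0] }
  have hline : ∀ u t : I, (AffineMap.lineMap (f t) (B t) (u : ℝ) : E) ∈ W := fun u t =>
    hball t <| (convex_ball (f t) δ).segment_subset (Metric.mem_ball_self hδ) (hBt t) <| by
      rw [segment_eq_image_lineMap]
      exact mem_image_of_mem _ u.2
  refine ⟨q, fun s => ∑ k : Fin (n + 1),
    ((n.choose k : ℝ) * s ^ (k : ℕ) * (1 - s) ^ (n - (k : ℕ))) • f (bernstein.z k), ?_, ?_, ⟨?_⟩⟩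
  · fun_prop
  · intro t
    change B t = _
    simp [hB, bernsteinApproximation.apply, bernstein_apply]
  · exact
      { toFun := fun v => ⟨AffineMap.lineMap (f v.2) (B v.2) (v.1 : ℝ), hline v.1 v.2⟩
        continuous_toFun := by
          simp only [AffineMap.lineMap_apply_module]
          fun_prop
        map_zero_left := fun t => by ext; simp [f]
        map_one_left := fun t => by ext; simp [q]
        prop' := by
          rintro u t (rfl | rfl)
          · ext; simp [f, hB]
          · ext; simp [f, hB, hn0] }

theorem simplyConnectedSpace_rayCompl {E : Type*} [NormedAddCommGroup E] [NormedSpace ℝ E]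
    [FiniteDimensional ℝ E] (hE : 3 < finrank ℝ E) {P : Set E} (hP : P.Finite) :
    SimplyConnectedSpace (rayCompl P) := by
  -- A point which is generic with respect to some `x` lies itself on none of the rays.
  have hmem : ∀ {c x : E}, (∀ p ∈ P, ∀ a b : ℝ, c ≠ a • p + b • x) → c ∈ rayCompl P :=
    fun h p hp r _ => by simpa using h p hp r 0
  rw [simply_connected_iff_loops_nullhomotopic]
  constructor
  · rw [← isPathConnected_iff_pathConnectedSpace, isPathConnected_iff]
    constructor
    · obtain ⟨c, hc⟩ := exists_generic_point hE hP (g := fun _ => (0 : E)) contDiff_const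
      exact ⟨c, hmem fun p hp a b => hc p hp a b 0⟩
    · intro x hx y hy
      -- The curve only serves to make `c` generic with respect to both `x` and `y`.
      obtain ⟨c, hc⟩ := exists_generic_point hE hP (g := fun s : ℝ => (1 - s) • x + s • y)
        (by fun_prop)
      have hxc := segment_subset_rayCompl hx fun p hp a b => by simpa using hc p hp a b 0
      have hyc := segment_subset_rayCompl hy fun p hp a b => by simpa using hc p hp a b 1
      exact (JoinedIn.of_segment_subset hxc).trans (JoinedIn.of_segment_subset hyc).symm
  · intro x γ
    obtain ⟨q, g, hg, hqg, hγq⟩ := exists_contDiff_homotopic (isOpen_rayCompl hP) γ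
    refine hγq.trans ?_
    obtain ⟨c, hc⟩ := exists_generic_point hE hP hg
    let D : Set E := ⋃ t : I, segment ℝ (q t : E) c
    have hDW : D ⊆ rayCompl P := iUnion_subset fun t =>
      segment_subset_rayCompl (q t).2 fun p hp a b => by rw [hqg]; exact hc p hp a b t
    have hqD : ∀ t, (q t : E) ∈ D := fun t => mem_iUnion.2 ⟨t, left_mem_segment ℝ _ _⟩
    have hstar : StarConvex ℝ c D := starConvex_iUnion fun t =>
      (convex_segment (q t : E) c).starConvex (right_mem_segment ℝ _ _)
    have : ContractibleSpace D := hstar.contractibleSpace ⟨_, hqD 0⟩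
    have hxD : (x : E) ∈ D := by simpa using hqD 0
    let qD : Path (⟨x, hxD⟩ : D) ⟨x, hxD⟩ :=
      { toFun := fun t => ⟨q t, hqD t⟩
        continuous_toFun := by fun_prop
        source' := by simp
        target' := by simp }
    exact (SimplyConnectedSpace.paths_homotopic qD (Path.refl _)).map
      ⟨inclusion hDW, continuous_inclusion hDW⟩

theorem simplyConnectedSpace_of_retract {X Y : Type*} [TopologicalSpace X] [TopologicalSpace Y]
    [SimplyConnectedSpace Y] (i : C(X, Y)) (r : C(Y, X)) (hri : ∀ x, r (i x) = x) :
    SimplyConnectedSpace X := by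
  rw [simply_connected_iff_loops_nullhomotopic]
  refine ⟨Function.Surjective.pathConnectedSpace (f := r) (fun x => ⟨i x, hri x⟩) r.continuous, ?_⟩
  intro x γ
  have h := ((SimplyConnectedSpace.paths_homotopic (γ.map i.continuous) (Path.refl _)).map
    r).pathCast (hri x).symm (hri x).symm
  convert h using 1
  · ext t
    simp [hri]
  · ext t
    simp [hri]

/-- The complement of a finite set of points in the 4-sphere is simply connected. -/
theorem compl_finite_subset_sphere_simply_connected
    (F : Set (Metric.sphere (0 : EuclideanSpace ℝ (Fin 5)) 1)) (hF : F.Finite) :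
    SimplyConnectedSpace ↥Fᶜ := by
  let P : Set (EuclideanSpace ℝ (Fin 5)) := insert 0 (Subtype.val '' F)
  have : SimplyConnectedSpace (rayCompl P) :=
    simplyConnectedSpace_rayCompl (by simp) ((hF.image _).insert 0)
  have hne : ∀ x ∈ rayCompl P, x ≠ 0 := fun x hx => by
    simpa using hx 0 (mem_insert _ _) 0 le_rfl
  let i : C(↥Fᶜ, rayCompl P) :=
    { toFun := fun x => ⟨x.1.1, by
        have hx1 : ‖x.1.1‖ = 1 := by simp
        rintro p (rfl | ⟨p, hp, rfl⟩) r hr h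
        · simp [h] at hx1
        · have hp1 : ‖p.1‖ = 1 := by simp
          have hr1 : r = 1 := by
            rw [h, norm_smul, hp1, mul_one, Real.norm_of_nonneg hr] at hx1
            exact hx1
          rw [hr1, one_smul] at h
          exact x.2 (Subtype.ext h ▸ hp)⟩
      continuous_toFun := by fun_prop }
  let r : C(rayCompl P, ↥Fᶜ) :=
    { toFun := fun x => ⟨⟨‖x.1‖⁻¹ • x.1, by
          simp [norm_smul, norm_ne_zero_iff.2 (hne x.1 x.2)]⟩, fun hx => by
        refine x.2 _ (mem_insert_of_mem _ (mem_image_of_mem _ hx)) ‖x.1‖ (norm_nonneg _) ?_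
        rw [smul_inv_smul₀ (norm_ne_zero_iff.2 (hne x.1 x.2))]⟩
      continuous_toFun := by
        have : Continuous fun x : rayCompl P => ‖x.1‖⁻¹ :=
          (continuous_norm.comp continuous_subtype_val).inv₀ fun x =>
            norm_ne_zero_iff.2 (hne x.1 x.2)
        fun_prop }
  refine simplyConnectedSpace_of_retract i r fun x => ?_
  ext1
  ext1
  simp [i, r]
end

section
/- Let n be a natural number. The group of ℤ-linear automorphisms of Fin n → ℤ that preserve the standard dot product has cardinality 2ⁿ · n!. -/
/-!
An isometry `φ` sends each standard basis vector `e j` to a lattice vector of norm `1`, and these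
are exactly the vectors `± e i` (`exists_eq_single_of_norm_one`). Thus `φ (e j) = u j • e (τ j)`
with `u j = ± 1`, and orthogonality of the `e j` forces `τ` to be injective, hence a permutation.
So the isometries are exactly the signed permutations `x ↦ (i ↦ ε i * x (σ i))`
(`signedPerm_bijective`), and there are `2 ^ n * n!` pairs `(ε, σ)`.
-/

/-- An integer vector of norm `1` is `± e i`: some coordinate is nonzero, its square already
accounts for the whole norm, so it is a unit and the other coordinates vanish. -/
lemma exists_eq_single_of_norm_one {n : ℕ} (v : Fin n → ℤ) (h : ∑ i, v i * v i = 1) :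
    ∃ (i : Fin n) (u : ℤˣ), v = Pi.single i (u : ℤ) := by
  obtain ⟨i, hi⟩ : ∃ i, v i ≠ 0 := by
    by_contra! hv
    simp [hv] at h
  rw [← Finset.add_sum_erase _ _ (Finset.mem_univ i)] at h
  have hrest : 0 ≤ ∑ k ∈ Finset.univ.erase i, v k * v k :=
    Finset.sum_nonneg fun k _ => mul_self_nonneg _
  have hpos : 0 < v i * v i := mul_self_pos.mpr hi
  have hone : v i * v i = 1 := by omega
  have hzero : ∑ k ∈ Finset.univ.erase i, v k * v k = 0 := by omega
  rw [Finset.sum_eq_zero_iff_of_nonneg fun k _ => mul_self_nonneg _] at hzero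
  refine ⟨i, ⟨v i, v i, hone, hone⟩, funext fun k => ?_⟩
  by_cases hk : k = i
  · subst hk
    simp
  · simpa [Pi.single_eq_of_ne hk] using hzero k (by simp [hk])

/-- The signed permutation with signs `ε` and permutation `σ`, sending `x` to
`i ↦ ε i * x (σ i)`. -/
def signedPerm {n : ℕ} (ε : Fin n → ℤˣ) (σ : Equiv.Perm (Fin n)) :
    (Fin n → ℤ) ≃ₗ[ℤ] (Fin n → ℤ) where
  toFun x i := ε i * x (σ i)
  map_add' x y := by ext i; simp [mul_add]
  map_smul' c x := by ext i; simp [mul_left_comm]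
  invFun y j := ε (σ.symm j) * y (σ.symm j)
  left_inv x := by ext j; simp [← mul_assoc, ← Units.val_mul]
  right_inv y := by ext j; simp [← mul_assoc, ← Units.val_mul]

lemma signedPerm_apply {n : ℕ} (ε : Fin n → ℤˣ) (σ : Equiv.Perm (Fin n)) (x : Fin n → ℤ)
    (i : Fin n) : signedPerm ε σ x i = ε i * x (σ i) := rfl

lemma signedPerm_isometry {n : ℕ} (ε : Fin n → ℤˣ) (σ : Equiv.Perm (Fin n)) (x y : Fin n → ℤ) :
    ∑ i, signedPerm ε σ x i * signedPerm ε σ y i = ∑ i, x i * y i := by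
  rw [← Equiv.sum_comp σ fun i => x i * y i]
  refine Finset.sum_congr rfl fun i _ => ?_
  rw [signedPerm_apply, signedPerm_apply, mul_mul_mul_comm, ← Units.val_mul]
  simp

lemma signedPerm_bijective (n : ℕ) :
    Function.Bijective (fun p : (Fin n → ℤˣ) × Equiv.Perm (Fin n) =>
      (⟨signedPerm p.1 p.2, signedPerm_isometry p.1 p.2⟩ :
        {φ : (Fin n → ℤ) ≃ₗ[ℤ] (Fin n → ℤ) //
          ∀ x y : Fin n → ℤ, ∑ i, φ x i * φ y i = ∑ i, x i * y i})) := by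
  constructor
  · rintro ⟨ε, σ⟩ ⟨ε', σ'⟩ h
    have heq : signedPerm ε σ = signedPerm ε' σ' := congrArg Subtype.val h
    -- Compare coordinate `i` of the two images of `e (σ i)`: the left one is `ε i ≠ 0`.
    have key (i : Fin n) : σ' i = σ i ∧ ε i = ε' i := by
      have hi := congrFun (LinearEquiv.congr_fun heq (Pi.single (σ i) 1)) i
      rw [signedPerm_apply, signedPerm_apply, Pi.single_eq_same, mul_one] at hi
      by_cases hs : σ' i = σ i
      · rw [hs, Pi.single_eq_same, mul_one] at hi
        exact ⟨hs, Units.ext hi⟩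
      · rw [Pi.single_eq_of_ne hs, mul_zero] at hi
        exact absurd hi (ε i).ne_zero
    exact Prod.ext (funext fun i => (key i).2) (Equiv.ext fun i => (key i).1.symm)
  · rintro ⟨φ, hφ⟩
    have hcol (j : Fin n) : ∃ (i : Fin n) (u : ℤˣ), φ (Pi.single j 1) = Pi.single i (u : ℤ) :=
      exists_eq_single_of_norm_one _ (by rw [hφ]; simp [Pi.single_apply])
    choose τ u hτ using hcol
    have hinj : Function.Injective τ := by
      intro j k hjk
      by_contra hne
      have h := hφ (Pi.single j 1) (Pi.single k 1)
      rw [hτ, hτ, hjk] at h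
      simp [Pi.single_apply, Ne.symm hne] at h
    let τ' : Equiv.Perm (Fin n) := Equiv.ofBijective τ (Finite.injective_iff_bijective.mp hinj)
    refine ⟨(fun i => u (τ'.symm i), τ'.symm), Subtype.ext ?_⟩
    apply LinearEquiv.toLinearMap_injective
    refine LinearMap.pi_ext' fun j => LinearMap.ext_ring (funext fun i => ?_)
    change signedPerm (fun i => u (τ'.symm i)) τ'.symm (Pi.single j 1) i = φ (Pi.single j 1) i
    rw [hτ, signedPerm_apply]
    obtain ⟨k, rfl⟩ := τ'.surjective i
    rw [Equiv.symm_apply_apply]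
    change (u k : ℤ) * (Pi.single j 1 : Fin n → ℤ) k =
      (Pi.single (τ j) (u j : ℤ) : Fin n → ℤ) (τ k)
    by_cases hk : k = j
    · subst hk
      simp
    · simp [Pi.single_apply, hk, hinj.eq_iff]

/-- The group of `ℤ`-linear automorphisms of `Fin n → ℤ` preserving the standard dot product
(the hyperoctahedral group) has cardinality `2ⁿ · n!`. -/
theorem card_isometries_standard_lattice (n : ℕ) :
    Nat.card {φ : (Fin n → ℤ) ≃ₗ[ℤ] (Fin n → ℤ) //
        ∀ x y : Fin n → ℤ, ∑ i, φ x i * φ y i = ∑ i, x i * y i}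
      = 2 ^ n * n.factorial := by
  rw [← Nat.card_eq_of_bijective _ (signedPerm_bijective n)]
  simp [Nat.card_eq_fintype_card, Fintype.card_perm]
end
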